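/- The value (7+√2)/9 is the greatest element of the set of average exclusion success probabilities p(REC) achievable by qubit strategies for the (2,3) REC: every qubit strategy (with arbitrary three-outcome POVMs) satisfies p(REC) ≤ (7+√2)/9, and some qubit strategy attains this value. -/

import Mathlib

/-!
Write every `2 × 2` Hermitian matrix as `A = α 1 + x · σ` with `α` real and `x ∈ ℝ³` (its Bloch
vector). If `A` is positive semidefinite then `‖x‖ ≤ α`, and
`Tr (A B) = 2 (α β + ⟪x, y⟫)`. For two POVMs with data `(α_a, x_a)` and `(β_b, y_b)` this gives
`∑ α_a = ∑ β_b = 1`, `∑ x_a = ∑ y_b = 0`, and choosing the states optimally shows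
`18 p ≤ 12 + ∑_{a,b} ‖x_a + y_b‖`. The upper bound is therefore the geometric inequality
`∑_{a,b} ‖x_a + y_b‖ ≤ 2 + 2 √2` (`sum_norm_add_le`).

Its proof rests on the pointwise estimate `norm_add_le_tangent`: put `s_b = √(1 + 4 ‖y_b‖²)`. Since
`‖x_a‖ ≤ 1/2`, convexity of the norm along the ray through `x_a` followed by the tangent-line bound
for the (concave) square root gives
`‖x_a + y_b‖ ≤ (1 - 2 ‖x_a‖) ‖y_b‖ + ‖x_a‖ s_b + 2 ⟪x_a, y_b⟫ / s_b`.
The last term is linear in `x_a`, so it disappears when summed over `a`; what remains is a function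
of the lengths `‖y_b‖ ∈ [0, 1/2]`, bounded through `s_b ≤ 1 + 2 (√2 - 1) ‖y_b‖`.

Equality holds for the two projective measurements `σ_z`, `σ_x`, each completed by a zero third
effect, with `ρ_{ab}` the pure state whose Bloch vector is opposite to `x_a + y_b`.
-/

open Matrix
open scoped ComplexOrder

/-- The states and POVMs form a valid qubit strategy for the `(2,3)` REC/RAC:
the states are positive semidefinite with unit trace, and each of the two decoding
triples is a POVM. -/
def IsQubitStrategy3 (ρ : Fin 3 → Fin 3 → Matrix (Fin 2) (Fin 2) ℂ)
    (M : Fin 2 → Fin 3 → Matrix (Fin 2) (Fin 2) ℂ) : Prop :=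
  (∀ a₁ a₂, (ρ a₁ a₂).PosSemidef ∧ (ρ a₁ a₂).trace = 1) ∧
  (∀ i c, (M i c).PosSemidef) ∧
  (∀ i, ∑ c : Fin 3, M i c = 1)

/-- Average exclusion success probability for the `(2,3)` REC with a qubit strategy. -/
noncomputable def pREC3 (ρ : Fin 3 → Fin 3 → Matrix (Fin 2) (Fin 2) ℂ)
    (M : Fin 2 → Fin 3 → Matrix (Fin 2) (Fin 2) ℂ) : ℝ :=
  (1 / 18) * ∑ a₁ : Fin 3, ∑ a₂ : Fin 3, ∑ i : Fin 2,
    (((1 - M i (if i = 0 then a₁ else a₂)) * ρ a₁ a₂).trace).re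

open scoped InnerProductSpace

/-! ### The geometric inequality -/

/-- Convexity of `t ↦ ‖t x + y‖` on the ray through `x`, combined with
`√(s² + t) ≤ s + t / (2 s)` at the vector of length `1/2` on that ray. The resulting bound depends
on `x` only through `‖x‖` and a linear term. -/
lemma norm_add_le_tangent {E : Type*} [NormedAddCommGroup E] [InnerProductSpace ℝ E] (x y : E)
    (hx : ‖x‖ ≤ 1 / 2) :
    ‖x + y‖ ≤ (1 - 2 * ‖x‖) * ‖y‖ + ‖x‖ * √(1 + 4 * ‖y‖ ^ 2)
      + 2 / √(1 + 4 * ‖y‖ ^ 2) * ⟪x, y⟫_ℝ := by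
  set s := √(1 + 4 * ‖y‖ ^ 2) with hs
  have hs2 : s ^ 2 = 1 + 4 * ‖y‖ ^ 2 := Real.sq_sqrt (by positivity)
  have hs0 : 0 < s := Real.sqrt_pos.2 (by positivity)
  rcases eq_or_ne x 0 with rfl | hx0
  · simp
  have hX : 0 < ‖x‖ := norm_pos_iff.2 hx0
  -- `x + y` as a convex combination of `y` and `x / (2 ‖x‖) + y`, scaled
  have h1 : ‖x + y‖ ≤ (1 - 2 * ‖x‖) * ‖y‖ + ‖x + (2 * ‖x‖) • y‖ := by
    have : x + y = (1 - 2 * ‖x‖) • y + (x + (2 * ‖x‖) • y) := by module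
    rw [this]
    refine (norm_add_le _ _).trans ?_
    rw [norm_smul, Real.norm_of_nonneg (by linarith)]
  have h2 : ‖x + (2 * ‖x‖) • y‖ ≤ ‖x‖ * s + 2 / s * ⟪x, y⟫_ℝ := by
    have hin : |⟪x, y⟫_ℝ| ≤ ‖x‖ * ‖y‖ := abs_real_inner_le_norm x y
    have hsq : ‖x + (2 * ‖x‖) • y‖ ^ 2 = ‖x‖ ^ 2 * s ^ 2 + 4 * ‖x‖ * ⟪x, y⟫_ℝ := by
      rw [norm_add_sq_real, inner_smul_right, norm_smul, hs2,
        Real.norm_of_nonneg (by positivity : (0:ℝ) ≤ 2 * ‖x‖)]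
      ring
    refine le_of_sq_le_sq ?_ ?_
    · rw [hsq]
      have : (‖x‖ * s + 2 / s * ⟪x, y⟫_ℝ) ^ 2
          = ‖x‖ ^ 2 * s ^ 2 + 4 * ‖x‖ * ⟪x, y⟫_ℝ + (2 / s * ⟪x, y⟫_ℝ) ^ 2 := by
        field_simp
        ring
      nlinarith [sq_nonneg (2 / s * ⟪x, y⟫_ℝ)]
    · have : ‖x‖ * s + 2 / s * ⟪x, y⟫_ℝ = (‖x‖ * s ^ 2 + 2 * ⟪x, y⟫_ℝ) / s := by
        field_simp
      rw [this, hs2]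
      refine div_nonneg ?_ hs0.le
      nlinarith [neg_abs_le ⟪x, y⟫_ℝ, mul_nonneg hX.le (sq_nonneg (2 * ‖y‖ - 1 / 2)),
        mul_nonneg hX.le (sq_nonneg ‖y‖)]
  linarith

lemma norm_le_half {E : Type*} [NormedAddCommGroup E] (x : Fin 3 → E)
    (h0 : ∑ a, x a = 0) (h1 : ∑ a, ‖x a‖ ≤ 1) (a : Fin 3) : ‖x a‖ ≤ 1 / 2 := by
  have key : ‖x a‖ ≤ ∑ b ∈ Finset.univ.erase a, ‖x b‖ := by
    have h := Finset.add_sum_erase Finset.univ x (Finset.mem_univ a)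
    rw [h0] at h
    rw [eq_neg_of_add_eq_zero_left h, norm_neg]
    exact norm_sum_le _ _
  have h := Finset.add_sum_erase Finset.univ (fun b => ‖x b‖) (Finset.mem_univ a)
  linarith

/-- The chord of the convex function `r ↦ √(1 + 4 r²)` over `[0, 1/2]` lies above its graph. -/
lemma sqrt_le_chord {r : ℝ} (h0 : 0 ≤ r) (h1 : r ≤ 1 / 2) :
    √(1 + 4 * r ^ 2) ≤ 1 + 2 * (√2 - 1) * r := by
  have h2 : √2 ^ 2 = 2 := Real.sq_sqrt (by norm_num)
  have h3 : 1 ≤ √2 := Real.one_le_sqrt.2 (by norm_num)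
  refine Real.sqrt_le_iff.2 ⟨by nlinarith, ?_⟩
  nlinarith [mul_nonneg (mul_nonneg (sub_nonneg.2 h3) h0) (sub_nonneg.2 h1)]

/-- For two closed triangles of perimeter at most `1`, the nine sums of a side of one and a side
of the other have total length at most `2 + 2√2`. -/
lemma sum_norm_add_le {E : Type*} [NormedAddCommGroup E] [InnerProductSpace ℝ E]
    (x y : Fin 3 → E) (hx0 : ∑ a, x a = 0) (hx1 : ∑ a, ‖x a‖ ≤ 1)
    (hy0 : ∑ b, y b = 0) (hy1 : ∑ b, ‖y b‖ ≤ 1) :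
    ∑ a, ∑ b, ‖x a + y b‖ ≤ 2 + 2 * √2 := by
  have h2 : √2 ^ 2 = 2 := Real.sq_sqrt (by norm_num)
  have h3 : 1 ≤ √2 := Real.one_le_sqrt.2 (by norm_num)
  have hb : ∀ b, ∑ a, ‖x a + y b‖ ≤ 1 + (2 * √2 - 1) * ‖y b‖ := by
    intro b
    have hyb := norm_le_half y hy0 hy1 b
    have hch := sqrt_le_chord (norm_nonneg (y b)) hyb
    have hs : 2 * ‖y b‖ ≤ √(1 + 4 * ‖y b‖ ^ 2) := Real.le_sqrt_of_sq_le (by nlinarith)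
    have hlin : ∑ a, ⟪x a, y b⟫_ℝ = 0 := by rw [← sum_inner, hx0, inner_zero_left]
    have hsum := Finset.sum_le_sum fun a (_ : a ∈ Finset.univ) =>
      norm_add_le_tangent (x a) (y b) (norm_le_half x hx0 hx1 a)
    have heq : ∑ a, ((1 - 2 * ‖x a‖) * ‖y b‖ + ‖x a‖ * √(1 + 4 * ‖y b‖ ^ 2)
        + 2 / √(1 + 4 * ‖y b‖ ^ 2) * ⟪x a, y b⟫_ℝ)
        = 3 * ‖y b‖ + (∑ a, ‖x a‖) * (√(1 + 4 * ‖y b‖ ^ 2) - 2 * ‖y b‖) := by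
      rw [Finset.sum_add_distrib, ← Finset.mul_sum, hlin]
      simp only [Fin.sum_univ_three]
      ring
    rw [heq] at hsum
    nlinarith [mul_nonneg (sub_nonneg.2 hx1) (sub_nonneg.2 hs)]
  rw [Finset.sum_comm]
  refine (Finset.sum_le_sum fun b _ => hb b).trans ?_
  rw [Finset.sum_add_distrib, ← Finset.mul_sum]
  simp only [Finset.sum_const, Finset.card_univ, Fintype.card_fin, nsmul_eq_mul]
  push_cast
  nlinarith

/-! ### Bloch coordinates -/

/-- The Bloch vector `x` of a Hermitian matrix `A = α 1 + x · σ`. -/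
noncomputable def blochVec (A : Matrix (Fin 2) (Fin 2) ℂ) : EuclideanSpace ℝ (Fin 3) :=
  !₂[(A 1 0).re, (A 1 0).im, ((A 0 0).re - (A 1 1).re) / 2]

/-- The scalar part `α` of a Hermitian matrix `A = α 1 + x · σ`: half its trace. -/
noncomputable def blochScalar (A : Matrix (Fin 2) (Fin 2) ℂ) : ℝ :=
  ((A 0 0).re + (A 1 1).re) / 2

lemma sum_blochVec (M : Fin 3 → Matrix (Fin 2) (Fin 2) ℂ) (h : ∑ c, M c = 1) :
    ∑ c, blochVec (M c) = 0 := by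
  rw [Fin.sum_univ_three] at h ⊢
  have h00 := congrArg Complex.re (congrFun (congrFun h 0) 0)
  have h11 := congrArg Complex.re (congrFun (congrFun h 1) 1)
  have h10 := congrFun (congrFun h 1) 0
  have h10r := congrArg Complex.re h10
  have h10i := congrArg Complex.im h10
  simp at h00 h11 h10r h10i
  ext i
  fin_cases i <;> simp [blochVec] <;> linarith

lemma sum_blochScalar (M : Fin 3 → Matrix (Fin 2) (Fin 2) ℂ) (h : ∑ c, M c = 1) :
    ∑ c, blochScalar (M c) = 1 := by
  rw [Fin.sum_univ_three] at h ⊢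
  have h00 := congrArg Complex.re (congrFun (congrFun h 0) 0)
  have h11 := congrArg Complex.re (congrFun (congrFun h 1) 1)
  simp at h00 h11
  simp only [blochScalar]
  linarith

lemma hermitian_entries {A : Matrix (Fin 2) (Fin 2) ℂ} (h : A.IsHermitian) :
    (A 0 0).im = 0 ∧ (A 1 1).im = 0 ∧ (A 0 1).re = (A 1 0).re ∧ (A 0 1).im = -(A 1 0).im := by
  have h00 := congrArg Complex.im (h.apply 0 0)
  have h11 := congrArg Complex.im (h.apply 1 1)
  have h01r := congrArg Complex.re (h.apply 0 1)
  have h01i := congrArg Complex.im (h.apply 0 1)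
  simp at h00 h11 h01r h01i
  refine ⟨by linarith, by linarith, by linarith, by linarith⟩

/-- Nonnegativity of the determinant `α² - ‖x‖²` and of the trace `2 α`. -/
lemma norm_blochVec_le {A : Matrix (Fin 2) (Fin 2) ℂ} (h : A.PosSemidef) :
    ‖blochVec A‖ ≤ blochScalar A := by
  obtain ⟨h0, h1, hr, hi⟩ := hermitian_entries h.isHermitian
  have hd := (Complex.le_def.1 h.det_nonneg).1
  have ht := (Complex.le_def.1 h.trace_nonneg).1
  rw [Matrix.det_fin_two] at hd
  rw [Matrix.trace_fin_two] at ht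
  simp [h0, h1, hr, hi] at hd ht
  refine le_of_sq_le_sq ?_ (by simp only [blochScalar]; linarith)
  rw [EuclideanSpace.real_norm_sq_eq, Fin.sum_univ_three]
  simp [blochVec, blochScalar]
  nlinarith

lemma re_trace_mul {A B : Matrix (Fin 2) (Fin 2) ℂ} (hA : A.IsHermitian) (hB : B.IsHermitian) :
    (A * B).trace.re
      = 2 * (blochScalar A * blochScalar B + ⟪blochVec A, blochVec B⟫_ℝ) := by
  obtain ⟨h0, h1, hr, hi⟩ := hermitian_entries hA
  obtain ⟨k0, k1, kr, ki⟩ := hermitian_entries hB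
  rw [Matrix.trace_fin_two, PiLp.inner_apply, Fin.sum_univ_three]
  simp [Matrix.mul_apply, Fin.sum_univ_two, blochVec, blochScalar, h0, h1, hr, hi, k0, k1, kr, ki]
  ring

/-! ### The upper bound -/

/-- Cauchy–Schwarz against the Bloch vector of the state, whose norm is at most `1/2`; equality
holds for the pure state whose Bloch vector is opposite to that of `A + B`. -/
lemma exclusion_le {A B ρ : Matrix (Fin 2) (Fin 2) ℂ} (hA : A.IsHermitian) (hB : B.IsHermitian)
    (hρ : ρ.PosSemidef) (ht : ρ.trace = 1) :
    ((1 - A) * ρ).trace.re + ((1 - B) * ρ).trace.re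
      ≤ 2 - blochScalar A - blochScalar B + ‖blochVec A + blochVec B‖ := by
  have hs : blochScalar ρ = 1 / 2 := by
    have := congrArg Complex.re ht
    rw [Matrix.trace_fin_two] at this
    simp at this
    simp only [blochScalar]
    linarith
  have hn := norm_blochVec_le hρ
  rw [hs] at hn
  have hin := abs_real_inner_le_norm (blochVec A + blochVec B) (blochVec ρ)
  have hneg := neg_abs_le ⟪blochVec A + blochVec B, blochVec ρ⟫_ℝ
  have hmul := mul_le_mul_of_nonneg_left hn (norm_nonneg (blochVec A + blochVec B))
  rw [inner_add_left] at hin hneg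
  rw [sub_mul, sub_mul, one_mul, Matrix.trace_sub, Matrix.trace_sub, ht, Complex.sub_re,
    Complex.sub_re, re_trace_mul hA hρ.isHermitian, re_trace_mul hB hρ.isHermitian, hs,
    Complex.one_re]
  linarith

lemma pREC3_le {ρ : Fin 3 → Fin 3 → Matrix (Fin 2) (Fin 2) ℂ}
    {M : Fin 2 → Fin 3 → Matrix (Fin 2) (Fin 2) ℂ} (h : IsQubitStrategy3 ρ M) :
    pREC3 ρ M ≤ (7 + √2) / 9 := by
  obtain ⟨hρ, hM, hS⟩ := h
  have hper : ∀ i, ∑ c, ‖blochVec (M i c)‖ ≤ 1 := fun i =>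
    (Finset.sum_le_sum fun c _ => norm_blochVec_le (hM i c)).trans (sum_blochScalar _ (hS i)).le
  have hgeo := sum_norm_add_le (fun a => blochVec (M 0 a)) (fun b => blochVec (M 1 b))
    (sum_blochVec _ (hS 0)) (hper 0) (sum_blochVec _ (hS 1)) (hper 1)
  have hsum := Finset.sum_le_sum fun a (_ : a ∈ Finset.univ) =>
    Finset.sum_le_sum fun b (_ : b ∈ Finset.univ) =>
      exclusion_le (hM 0 a).isHermitian (hM 1 b).isHermitian (hρ a b).1 (hρ a b).2
  have h0 := sum_blochScalar _ (hS 0)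
  have h1 := sum_blochScalar _ (hS 1)
  simp only [pREC3, Fin.sum_univ_two, if_true, one_ne_zero, if_false]
  simp only [Fin.sum_univ_three] at hgeo hsum h0 h1 ⊢
  linarith

/-! ### An optimal strategy -/

/-- The matrix `(1 + z σ_z + x σ_x) / 2`; a pure state when `x² + z² = 1`. -/
noncomputable def realState (z x : ℝ) : Matrix (Fin 2) (Fin 2) ℂ :=
  !![(1 + z) / 2, x / 2; x / 2, (1 - z) / 2]

/-- On the unit circle `realState z x` is an orthogonal projection, hence of the form `Aᴴ A`. -/
lemma realState_posSemidef {z x : ℝ} (h : z ^ 2 + x ^ 2 = 1) : (realState z x).PosSemidef := by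
  have hc : (z : ℂ) ^ 2 + (x : ℂ) ^ 2 = 1 := by exact_mod_cast h
  have hp : realState z x = (realState z x)ᴴ * realState z x := by
    ext i j
    fin_cases i <;> fin_cases j <;>
      simp [realState, Matrix.mul_apply, Fin.sum_univ_two, Complex.conj_ofNat] <;> grind
  rw [hp]
  exact Matrix.posSemidef_conjTranspose_mul_self _

lemma realState_trace (z x : ℝ) : (realState z x).trace = 1 := by
  rw [Matrix.trace_fin_two]
  simp [realState]
  ring

lemma realState_exclusion (z x z' x' : ℝ) :
    ((1 - realState z x) * realState z' x').trace.re = (1 - z * z' - x * x') / 2 := by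
  rw [sub_mul, one_mul, Matrix.trace_sub, realState_trace, Matrix.trace_fin_two]
  simp [realState, Matrix.mul_apply, Fin.sum_univ_two]
  ring

/-- The measurements of `σ_z` and of `σ_x`, each with a zero third effect. -/
noncomputable def optM : Fin 2 → Fin 3 → Matrix (Fin 2) (Fin 2) ℂ :=
  ![![realState 1 0, realState (-1) 0, 0], ![realState 0 1, realState 0 (-1), 0]]

/-- The pure states opposite to `x_a + y_b`; for `a = b = 2` that vector is zero and any state
serves. -/
noncomputable def optρ : Fin 3 → Fin 3 → Matrix (Fin 2) (Fin 2) ℂ :=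
  ![![realState (-(√2 / 2)) (-(√2 / 2)), realState (-(√2 / 2)) (√2 / 2), realState (-1) 0],
    ![realState (√2 / 2) (-(√2 / 2)), realState (√2 / 2) (√2 / 2), realState 1 0],
    ![realState 0 (-1), realState 0 1, realState 1 0]]

lemma opt_isQubitStrategy3 : IsQubitStrategy3 optρ optM := by
  have h2 : √2 ^ 2 = 2 := Real.sq_sqrt (by norm_num)
  refine ⟨fun a b => ?_, fun i c => ?_, fun i => ?_⟩
  · fin_cases a <;> fin_cases b <;>
      exact ⟨realState_posSemidef (by linarith), realState_trace _ _⟩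
  · fin_cases i <;> fin_cases c <;>
      first
      | exact realState_posSemidef (by norm_num)
      | exact Matrix.PosSemidef.zero
  · fin_cases i <;> ext j k <;> fin_cases j <;> fin_cases k <;>
      simp [Fin.sum_univ_three, optM, realState] <;> norm_num

lemma pREC3_opt : pREC3 optρ optM = (7 + √2) / 9 := by
  simp only [pREC3, Fin.sum_univ_two, Fin.sum_univ_three, if_true, one_ne_zero, if_false]
  simp [optM, optρ, realState_exclusion, realState_trace]
  ring

/-- The maximum average exclusion success probability of the `(2,3)` REC over all qubit
strategies is `(7+√2)/9`. -/
theorem stmt9 :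
    IsGreatest
      {x : ℝ | ∃ (ρ : Fin 3 → Fin 3 → Matrix (Fin 2) (Fin 2) ℂ)
        (M : Fin 2 → Fin 3 → Matrix (Fin 2) (Fin 2) ℂ),
        IsQubitStrategy3 ρ M ∧ x = pREC3 ρ M}
      ((7 + Real.sqrt 2) / 9) := by
  refine ⟨⟨optρ, optM, opt_isQubitStrategy3, pREC3_opt.symm⟩, ?_⟩
  rintro _ ⟨ρ, M, h, rfl⟩
  exact pREC3_le h
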